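/- Let T be a C² expanding map of the circle 𝕋 with inf_x |DT(x)| ≥ Λ > 1, with intervals of local injectivity A_1, …, A_m each mapped by T onto all of 𝕋, and for ε ∈ (−1,1) let T_ε(x) = T(x) + ε (mod 1); assume sup_{ε∈(−1,1)} sup_x |D²T_ε(x)/DT_ε(x)| ≤ C₁ < ∞. Let P_ε denote the transfer operator of T_ε with respect to Haar (Lebesgue) measure m, given by (P_ε f)(x) = Σ_{y : T_ε(y) = x} f(y)/|DT_ε(y)|. Then for every n ≥ 1, every choice ε_1, …, ε_n ∈ (−1,1), and every x ∈ 𝕋: (P_{ε_n}∘⋯∘P_{ε_1}) 1 (x) ≥ exp( −C₁/(Λ−1) ). In particular the family {T_ε} satisfies the uniform lower bound property (LB). -/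

import Mathlib

/-!
Composing the lifts `F + ε_k` gives a lift `Φ` of `T_{ε_n} ∘ ⋯ ∘ T_{ε_1}`, and
`P_{ε_n} ⋯ P_{ε_1} 1 (x) = ∑ 1 / |Φ' y|` over the fibre of `x`. A distortion bound
`|Φ' a| ≤ exp (K * |Φ a - Φ b|) * |Φ' b|` whose exponent is measured on the images is stable under
composition: postcomposing with a `Λ`-expanding map of distortion `C` changes `K` to `(C + K) / Λ`,
and `C / (Λ - 1)` is the fixed point of this recursion. If `Φ` is increasing, the fibre of `x` is
enumerated by points `t₀ < t₁ < ⋯ < t_{N-1} < t_N = t₀ + 1` with `Φ t_{k+1} = Φ t_k + 1`, so by the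
mean value theorem `1 / Φ' t_k ≥ exp (-K) * (t_{k+1} - t_k)`, and the right-hand sides sum to
`exp (-K)`. A decreasing `Φ` is replaced by `-Φ`.
-/

open scoped BigOperators

/-- Composition of operators `P̄_n = P_n ∘ ⋯ ∘ P_1` (and `P̄_0 = id`). -/
def opComp {α : Type*} (P : ℕ → α → α) : ℕ → α → α
  | 0 => id
  | n + 1 => P (n + 1) ∘ opComp P n

/-- The derivative of a circle map, read off from a `1`-periodic-derivative lift `F` through
the canonical representative in `[0,1)`. -/
noncomputable def circleDeriv (F : ℝ → ℝ) : UnitAddCircle → ℝ := fun x =>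
  letI : Fact ((0 : ℝ) < 1) := ⟨one_pos⟩
  deriv F ((AddCircle.equivIco 1 0 x : Set.Ico (0 : ℝ) (0 + 1)) : ℝ)

lemma unitAddCircle_coe_eq_coe_iff {a b : ℝ} :
    (a : UnitAddCircle) = b ↔ ∃ m : ℤ, a = b + m := by
  rw [← sub_eq_zero, ← AddCircle.coe_sub, AddCircle.coe_eq_zero_iff]
  simp only [zsmul_one, sub_eq_iff_eq_add', eq_comm]

lemma apply_add_intCast {F : ℝ → ℝ} {d : ℝ} (hF : ∀ x, F (x + 1) = F x + d) (x : ℝ) (m : ℤ) :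
    F (x + m) = F x + m * d := by
  rw [← zsmul_eq_mul]
  exact AddConstMapClass.map_add_int' (⟨F, hF⟩ : AddConstMap ℝ ℝ 1 d) x m

lemma circleDeriv_coe {F : ℝ → ℝ} {d : ℝ} (hF : ∀ x, F (x + 1) = F x + d) (t : ℝ) :
    circleDeriv F (t : UnitAddCircle) = deriv F t := by
  let : Fact ((0 : ℝ) < 1) := ⟨one_pos⟩
  obtain ⟨m, hm⟩ := unitAddCircle_coe_eq_coe_iff.1
    (AddCircle.coe_equivIco (p := (1 : ℝ)) (a := 0) (y := (t : UnitAddCircle)))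
  calc
    circleDeriv F (t : UnitAddCircle) = deriv F (t + m) := by rw [circleDeriv, hm]
    _ = deriv (fun s => F s + m * d) t := by
      rw [← deriv_comp_add_const, funext fun s => apply_add_intCast hF s m]
    _ = deriv F t := deriv_add_const _

@[simp]
lemma circleDeriv_id (y : UnitAddCircle) : circleDeriv id y = 1 := by
  simp only [circleDeriv, deriv_id]

@[simp]
lemma circleDeriv_neg (F : ℝ → ℝ) (y : UnitAddCircle) : circleDeriv (-F) y = -circleDeriv F y := by
  simp only [circleDeriv, deriv.neg]

@[simp]
lemma circleDeriv_add_const (F : ℝ → ℝ) (e : ℝ) (y : UnitAddCircle) :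
    circleDeriv (fun x => F x + e) y = circleDeriv F y := by
  simp only [circleDeriv, deriv_add_const]

/-- `F` is a differentiable lift, of some degree and without critical points, of the self-map `T`
of the circle. The degree may be negative, so `T` may reverse the orientation. -/
structure IsCircleLift (F : ℝ → ℝ) (T : UnitAddCircle → UnitAddCircle) : Prop where
  differentiable : Differentiable ℝ F
  deriv_ne_zero : ∀ x, deriv F x ≠ 0
  exists_degree : ∃ d : ℤ, ∀ x, F (x + 1) = F x + d
  semiconj : Function.Semiconj ((↑) : ℝ → UnitAddCircle) F T

/-- The transfer operator, with respect to Haar measure, of the circle map `T` with lift `F`. -/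
noncomputable def transferOperator (F : ℝ → ℝ) (T : UnitAddCircle → UnitAddCircle)
    (f : UnitAddCircle → ℝ) (x : UnitAddCircle) : ℝ :=
  ∑ᶠ y ∈ {y | T y = x}, f y / |circleDeriv F y|

/-- `log |F'|` has Lipschitz constant at most `K` as a function of the value of `F`, written
multiplicatively. Measuring distances between images rather than between points is what keeps the
bound uniform along compositions of expanding maps. -/
def ImageDistortionLE (F : ℝ → ℝ) (K : ℝ) : Prop :=
  ∀ x y, |deriv F x| ≤ Real.exp (K * |F x - F y|) * |deriv F y|

namespace IsCircleLift

variable {F G : ℝ → ℝ} {T S : UnitAddCircle → UnitAddCircle}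

protected lemma id : IsCircleLift id id where
  differentiable := differentiable_id
  deriv_ne_zero x := by simp only [deriv_id, ne_eq, one_ne_zero, not_false_eq_true]
  exists_degree := ⟨1, fun x => by simp only [id, Int.cast_one]⟩
  semiconj := Function.Semiconj.id_right

protected lemma comp (hF : IsCircleLift F T) (hG : IsCircleLift G S) :
    IsCircleLift (F ∘ G) (T ∘ S) where
  differentiable := hF.differentiable.comp hG.differentiable
  deriv_ne_zero x := by
    rw [deriv_comp x (hF.differentiable _) (hG.differentiable _)]
    exact mul_ne_zero (hF.deriv_ne_zero _) (hG.deriv_ne_zero _)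
  exists_degree := by
    obtain ⟨d, hd⟩ := hF.exists_degree
    obtain ⟨d', hd'⟩ := hG.exists_degree
    refine ⟨d' * d, fun x => ?_⟩
    rw [Function.comp_apply, hd', apply_add_intCast hd, Int.cast_mul, Function.comp_apply]
  semiconj := hF.semiconj.comp_right hG.semiconj

protected lemma neg (hF : IsCircleLift F T) : IsCircleLift (-F) (-T) where
  differentiable := hF.differentiable.neg
  deriv_ne_zero x := by simpa only [deriv.neg, neg_ne_zero] using hF.deriv_ne_zero x
  exists_degree := by
    obtain ⟨d, hd⟩ := hF.exists_degree
    refine ⟨-d, fun x => ?_⟩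
    rw [Pi.neg_apply, hd, neg_add, Int.cast_neg, Pi.neg_apply]
  semiconj x := by rw [Pi.neg_apply, Pi.neg_apply, AddCircle.coe_neg, hF.semiconj x]

protected lemma add_const (hF : IsCircleLift F T) (e : ℝ) :
    IsCircleLift (fun x => F x + e) (fun y => T y + (e : UnitAddCircle)) where
  differentiable := hF.differentiable.add_const e
  deriv_ne_zero x := by simpa only [deriv_add_const] using hF.deriv_ne_zero x
  exists_degree := hF.exists_degree.imp fun _ hd x => by rw [hd]; ring
  semiconj x := by rw [AddCircle.coe_add, hF.semiconj x]

lemma circleDeriv_coe (hF : IsCircleLift F T) (t : ℝ) :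
    circleDeriv F (t : UnitAddCircle) = deriv F t :=
  hF.exists_degree.elim fun _ hd => _root_.circleDeriv_coe hd t

lemma circleDeriv_comp (hF : IsCircleLift F T) (hG : IsCircleLift G S) (y : UnitAddCircle) :
    circleDeriv (F ∘ G) y = circleDeriv F (S y) * circleDeriv G y := by
  obtain ⟨t, rfl⟩ := QuotientAddGroup.mk_surjective y
  have hS : S (t : UnitAddCircle) = (G t : ℝ) := (hG.semiconj t).symm
  change circleDeriv (F ∘ G) (t : UnitAddCircle) =
    circleDeriv F (S (t : UnitAddCircle)) * circleDeriv G (t : UnitAddCircle)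
  rw [hS, (hF.comp hG).circleDeriv_coe, hF.circleDeriv_coe, hG.circleDeriv_coe,
    deriv_comp t (hF.differentiable _) (hG.differentiable _)]

lemma strictMono_or_strictMono_neg (hF : IsCircleLift F T) : StrictMono F ∨ StrictMono (-F) := by
  -- Darboux: a derivative without zeros has constant sign.
  rcases hasDerivWithinAt_forall_lt_or_forall_gt_of_forall_ne convex_univ
    (fun x _ => (hF.differentiable x).hasDerivAt.hasDerivWithinAt)
    (fun x _ => hF.deriv_ne_zero x) with hneg | hpos
  · exact .inr (strictAnti_of_deriv_neg fun x => hneg x trivial).neg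
  · exact .inl (strictMono_of_deriv_pos fun x => hpos x trivial)

end IsCircleLift

lemma surjective_of_monotone_of_apply_add_one {F : ℝ → ℝ} {d : ℝ} (hcont : Continuous F)
    (hmono : Monotone F) (hd : 0 < d) (hF : ∀ x, F (x + 1) = F x + d) : Function.Surjective F := by
  have apply_intCast (m : ℤ) : F m = F 0 + m * d := by
    simpa only [zero_add] using apply_add_intCast hF 0 m
  refine hcont.surjective (Filter.tendsto_atTop_atTop_of_monotone hmono fun b => ?_)
    (Filter.tendsto_atBot_atBot_of_monotone hmono fun b => ?_)
  · refine ⟨⌈(b - F 0) / d⌉, ?_⟩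
    rw [apply_intCast, ← sub_le_iff_le_add', ← div_le_iff₀ hd]
    exact Int.le_ceil _
  · refine ⟨⌊(b - F 0) / d⌋, ?_⟩
    rw [apply_intCast, ← le_sub_iff_add_le', ← le_div_iff₀ hd]
    exact Int.floor_le _

lemma IsCircleLift.exists_orderIso {F : ℝ → ℝ} {T : UnitAddCircle → UnitAddCircle}
    (hF : IsCircleLift F T) (hmono : StrictMono F) :
    ∃ (e : ℝ ≃o ℝ) (N : ℕ), ⇑e = F ∧ ∀ x, e (x + 1) = e x + N := by
  obtain ⟨d, hd⟩ := hF.exists_degree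
  have hd_pos : (0 : ℝ) < d := by linarith [hd 0, hmono (lt_add_one (0 : ℝ))]
  lift d to ℕ using by exact_mod_cast hd_pos.le
  exact ⟨hmono.orderIsoOfSurjective F
    (surjective_of_monotone_of_apply_add_one hF.differentiable.continuous hmono.monotone hd_pos hd),
    d, rfl, hd⟩

section Fibre

variable {e : ℝ ≃o ℝ} {N : ℕ}

lemma symm_apply_add_natCast (he : ∀ x, e (x + 1) = e x + N) (x : ℝ) :
    e.symm (x + N) = e.symm x + 1 := by
  rw [e.symm_apply_eq, he, e.apply_symm_apply]

lemma bijOn_fibre {T : UnitAddCircle → UnitAddCircle} (he : ∀ x, e (x + 1) = e x + N)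
    (hT : Function.Semiconj ((↑) : ℝ → UnitAddCircle) e T) (x : ℝ) :
    Set.BijOn (fun k : ℕ => (e.symm (x + k) : UnitAddCircle)) (Finset.range N)
      {y | T y = (x : UnitAddCircle)} := by
  let : Fact ((0 : ℝ) < 1) := ⟨one_pos⟩
  refine ⟨fun k _ => ?_, fun j hj k hk hjk => ?_, fun y hy => ?_⟩
  · rw [Set.mem_ofPred_eq, ← hT, e.apply_symm_apply, unitAddCircle_coe_eq_coe_iff]
    exact ⟨k, by rw [Int.cast_natCast]⟩
  · have mem_Ico {k : ℕ} (hk : k ∈ (Finset.range N : Set ℕ)) :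
        e.symm (x + k) ∈ Set.Ico (e.symm x) (e.symm x + 1) := by
      rw [← symm_apply_add_natCast he, Set.mem_Ico, e.symm.le_iff_le, e.symm.lt_iff_lt]
      simpa using hk
    have h := (AddCircle.coe_eq_coe_iff_of_mem_Ico (mem_Ico hj) (mem_Ico hk)).1 hjk
    exact_mod_cast add_left_cancel (e.symm.injective h)
  · obtain ⟨t, ⟨ht_ge, ht_lt⟩, rfl⟩ :
        ∃ t ∈ Set.Ico (e.symm x) (e.symm x + 1), (t : UnitAddCircle) = y :=
      ⟨_, (AddCircle.equivIco 1 (e.symm x) y).2, AddCircle.coe_equivIco⟩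
    rw [Set.mem_ofPred_eq, ← hT] at hy
    obtain ⟨m, hm⟩ := unitAddCircle_coe_eq_coe_iff.1 hy
    rw [← symm_apply_add_natCast he, e.lt_symm_apply, hm, add_lt_add_iff_left] at ht_lt
    rw [e.symm_apply_le, hm, le_add_iff_nonneg_right] at ht_ge
    lift m to ℕ using by exact_mod_cast ht_ge
    refine ⟨m, by simpa using ht_lt, ?_⟩
    simp only [← Int.cast_natCast (R := ℝ) m, ← hm, e.symm_apply_apply]

end Fibre

section TransferOperator

variable {F G : ℝ → ℝ} {T S : UnitAddCircle → UnitAddCircle}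

lemma IsCircleLift.finite_fibre (hF : IsCircleLift F T) (x : UnitAddCircle) :
    {y | T y = x}.Finite := by
  have of_strictMono {F T} (hF : IsCircleLift F T) (hmono : StrictMono F) (x : UnitAddCircle) :
      {y | T y = x}.Finite := by
    obtain ⟨e, N, rfl, he⟩ := hF.exists_orderIso hmono
    obtain ⟨t, rfl⟩ := QuotientAddGroup.mk_surjective x
    exact (bijOn_fibre he hF.semiconj t).finite_iff_finite.1 (Finset.finite_toSet _)
  rcases hF.strictMono_or_strictMono_neg with hmono | hmono
  · exact of_strictMono hF hmono x
  · simpa only [Pi.neg_apply, neg_inj] using of_strictMono hF.neg hmono (-x)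

lemma transferOperator_id (f : UnitAddCircle → ℝ) : transferOperator id id f = f := by
  ext x
  simp only [transferOperator, id, Set.ofPred_eq_eq_singleton, finsum_mem_singleton,
    circleDeriv_id, abs_one, div_one]

lemma transferOperator_neg (F : ℝ → ℝ) (T : UnitAddCircle → UnitAddCircle)
    (f : UnitAddCircle → ℝ) (x : UnitAddCircle) :
    transferOperator (-F) (-T) f (-x) = transferOperator F T f x := by
  simp only [transferOperator, Pi.neg_apply, neg_inj, circleDeriv_neg, abs_neg]

lemma transferOperator_add_const (F : ℝ → ℝ) (T : UnitAddCircle → UnitAddCircle) (e : ℝ)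
    (f : UnitAddCircle → ℝ) (x : UnitAddCircle) :
    transferOperator (fun t => F t + e) (fun y => T y + (e : UnitAddCircle)) f x =
      ∑ᶠ y ∈ {y | T y + (e : UnitAddCircle) = x}, f y / |circleDeriv F y| := by
  simp only [transferOperator, circleDeriv_add_const]

lemma transferOperator_comp (hF : IsCircleLift F T) (hG : IsCircleLift G S)
    (f : UnitAddCircle → ℝ) :
    transferOperator (F ∘ G) (T ∘ S) f = transferOperator F T (transferOperator G S f) := by
  ext x
  have fibre_eq : {y | (T ∘ S) y = x} = ⋃ z ∈ {z | T z = x}, {y | S y = z} := by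
    ext y
    simp only [Function.comp_apply, Set.mem_ofPred_eq, Set.mem_iUnion, exists_prop,
      exists_eq_right']
  have fibres_disjoint : {z | T z = x}.PairwiseDisjoint fun z => {y | S y = z} :=
    fun z _ z' _ hzz' => Set.disjoint_left.2 fun _ hz hz' => hzz' (hz.symm.trans hz')
  rw [transferOperator, fibre_eq,
    finsum_mem_biUnion fibres_disjoint (hF.finite_fibre x) fun z _ => hG.finite_fibre z]
  refine finsum_mem_congr rfl fun z _ => ?_
  rw [transferOperator, div_eq_mul_inv, finsum_mem_mul]
  refine finsum_mem_congr rfl fun y hy => ?_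
  rw [hF.circleDeriv_comp hG, abs_mul, hy.out, div_mul_eq_div_div_swap, div_eq_mul_inv _ |_|]

lemma IsCircleLift.opComp {F : ℕ → ℝ → ℝ} {T : ℕ → UnitAddCircle → UnitAddCircle}
    (h : ∀ k, IsCircleLift (F k) (T k)) (n : ℕ) : IsCircleLift (opComp F n) (opComp T n) := by
  induction n with
  | zero => exact .id
  | succ n ih => exact (h (n + 1)).comp ih

lemma transferOperator_opComp {F : ℕ → ℝ → ℝ} {T : ℕ → UnitAddCircle → UnitAddCircle}
    (h : ∀ k, IsCircleLift (F k) (T k)) (n : ℕ) :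
    transferOperator (opComp F n) (opComp T n) =
      opComp (fun k => transferOperator (F k) (T k)) n := by
  induction n with
  | zero => exact funext transferOperator_id
  | succ n ih =>
    ext f : 1
    exact (transferOperator_comp (h (n + 1)) (.opComp h n) f).trans (by rw [ih]; rfl)

end TransferOperator

section Distortion

variable {F G : ℝ → ℝ} {Λ C K : ℝ}

lemma mul_abs_sub_le_abs_apply_sub (hF : Differentiable ℝ F) (hexp : ∀ x, Λ ≤ |deriv F x|)
    (x y : ℝ) : Λ * |x - y| ≤ |F x - F y| := by
  wlog hxy : y < x generalizing x y
  · rcases eq_or_lt_of_le (not_lt.1 hxy) with rfl | hlt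
    · simp only [sub_self, abs_zero, mul_zero, le_refl]
    · simpa only [abs_sub_comm] using this y x hlt
  obtain ⟨c, -, hc⟩ := exists_deriv_eq_slope F hxy hF.continuous.continuousOn hF.differentiableOn
  rw [← le_div_iff₀ (abs_pos.2 (sub_ne_zero.2 hxy.ne')), ← abs_div, ← hc]
  exact hexp c

lemma abs_deriv_le_exp_mul_of_abs_deriv_deriv_le (hF : Differentiable ℝ (deriv F))
    (hne : ∀ x, deriv F x ≠ 0) (hdist : ∀ x, |deriv (deriv F) x| ≤ C * |deriv F x|) (x y : ℝ) :
    |deriv F x| ≤ Real.exp (C * |x - y|) * |deriv F y| := by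
  have hlog : |Real.log (deriv F x) - Real.log (deriv F y)| ≤ C * |x - y| := by
    refine convex_univ.norm_image_sub_le_of_norm_hasDerivWithin_le
      (fun t _ => ((hF t).hasDerivAt.log (hne t)).hasDerivWithinAt) (fun t _ => ?_) trivial trivial
    rw [norm_div, Real.norm_eq_abs, Real.norm_eq_abs, div_le_iff₀ (abs_pos.2 (hne t))]
    exact hdist t
  rw [← Real.exp_log (abs_pos.2 (hne x)), ← Real.exp_log (abs_pos.2 (hne y)), ← Real.exp_add,
    Real.exp_le_exp, Real.log_abs, Real.log_abs, ← sub_le_iff_le_add]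
  exact (le_abs_self _).trans hlog

lemma nonneg_of_le_exp_mul {a b c : ℝ} (ha : 0 < a) (hab : a ≤ Real.exp c * b)
    (hba : b ≤ Real.exp c * a) : 0 ≤ c := by
  have h : 1 * a ≤ Real.exp (c + c) * a := by
    calc
      1 * a ≤ Real.exp c * b := by rwa [one_mul]
      _ ≤ Real.exp c * (Real.exp c * a) := by gcongr
      _ = Real.exp (c + c) * a := by rw [Real.exp_add, mul_assoc]
  have hcc : 0 ≤ c + c := Real.one_le_exp_iff.1 (le_of_mul_le_mul_right h ha)
  linarith

namespace ImageDistortionLE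

protected lemma neg (h : ImageDistortionLE F K) : ImageDistortionLE (-F) K := fun x y => by
  simpa only [deriv.neg, abs_neg, Pi.neg_apply, neg_sub_neg, abs_sub_comm] using h x y

lemma id_of_nonneg (hK : 0 ≤ K) : ImageDistortionLE id K := fun x y => by
  simpa only [deriv_id, abs_one, mul_one, id] using Real.one_le_exp (by positivity)

lemma comp_of_expanding (hF : Differentiable ℝ F) (hG : Differentiable ℝ G) (hΛ : 0 < Λ)
    (hexp : ∀ x, Λ ≤ |deriv F x|)
    (hdist : ∀ x y, |deriv F x| ≤ Real.exp (C * |x - y|) * |deriv F y|) (hCK : 0 ≤ C + K)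
    (h : ImageDistortionLE G K) : ImageDistortionLE (F ∘ G) ((C + K) / Λ) := fun x y => by
  have hcontract : (C + K) * |G x - G y| ≤ (C + K) / Λ * |F (G x) - F (G y)| := by
    rw [div_mul_eq_mul_div, mul_div_assoc]
    gcongr
    rw [le_div_iff₀' hΛ]
    exact mul_abs_sub_le_abs_apply_sub hF hexp _ _
  rw [deriv_comp x (hF _) (hG _), deriv_comp y (hF _) (hG _), abs_mul, abs_mul]
  calc
    |deriv F (G x)| * |deriv G x|
      ≤ (Real.exp (C * |G x - G y|) * |deriv F (G y)|) *
          (Real.exp (K * |G x - G y|) * |deriv G y|) := by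
        gcongr
        exacts [hdist _ _, h x y]
    _ = Real.exp ((C + K) * |G x - G y|) * (|deriv F (G y)| * |deriv G y|) := by
        rw [add_mul, Real.exp_add]; ring
    _ ≤ Real.exp ((C + K) / Λ * |F (G x) - F (G y)|) * (|deriv F (G y)| * |deriv G y|) := by
        gcongr

lemma nonneg (h : ImageDistortionLE F K) {x y : ℝ} (hxy : F x ≠ F y) (hx : deriv F x ≠ 0) :
    0 ≤ K := by
  have hK : 0 ≤ K * |F x - F y| :=
    nonneg_of_le_exp_mul (abs_pos.2 hx) (h x y) (by simpa only [abs_sub_comm] using h y x)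
  exact nonneg_of_mul_nonneg_left hK (abs_pos.2 (sub_ne_zero.2 hxy))

lemma exp_neg_mul_sub_le_div_abs_deriv (h : ImageDistortionLE F K) (hF : Differentiable ℝ F)
    (hmono : StrictMono F) {a b : ℝ} (ha : deriv F a ≠ 0) (hab : a < b) :
    Real.exp (-(K * (F b - F a))) * (b - a) ≤ (F b - F a) / |deriv F a| := by
  have hFab : 0 < F b - F a := sub_pos.2 (hmono hab)
  have hK : 0 ≤ K := h.nonneg (hmono hab).ne ha
  obtain ⟨c, ⟨hac, hcb⟩, hc⟩ :=
    exists_deriv_eq_slope F hab hF.continuous.continuousOn hF.differentiableOn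
  have image_dist_le : |F a - F c| ≤ F b - F a := by
    rw [abs_sub_comm, abs_of_pos (sub_pos.2 (hmono hac))]
    linarith [hmono hcb]
  have deriv_le : |deriv F a| ≤ Real.exp (K * (F b - F a)) * ((F b - F a) / (b - a)) := by
    calc
      |deriv F a| ≤ Real.exp (K * |F a - F c|) * |deriv F c| := h a c
      _ ≤ Real.exp (K * (F b - F a)) * |deriv F c| := by gcongr
      _ = Real.exp (K * (F b - F a)) * ((F b - F a) / (b - a)) := by
        rw [hc, abs_of_pos (div_pos hFab (sub_pos.2 hab))]
  rw [← mul_div_assoc, le_div_iff₀ (sub_pos.2 hab)] at deriv_le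
  rw [le_div_iff₀ (abs_pos.2 ha), Real.exp_neg, mul_assoc, inv_mul_le_iff₀ (Real.exp_pos _),
    mul_comm (b - a)]
  exact deriv_le

end ImageDistortionLE

end Distortion

/-- `F` lifts the circle map `T`, expands distances by the factor `Λ` at least, and has derivative
with `log |F'|` Lipschitz of constant `C`, written multiplicatively. -/
structure IsExpandingLift (F : ℝ → ℝ) (T : UnitAddCircle → UnitAddCircle) (Λ C : ℝ) : Prop
    extends IsCircleLift F T where
  le_abs_deriv : ∀ x, Λ ≤ |deriv F x|
  abs_deriv_le : ∀ x y, |deriv F x| ≤ Real.exp (C * |x - y|) * |deriv F y|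

namespace IsExpandingLift

variable {F : ℝ → ℝ} {T : UnitAddCircle → UnitAddCircle} {Λ C : ℝ}

lemma of_contDiff (hF : ContDiff ℝ 2 F) {d : ℤ} (hdeg : ∀ x, F (x + 1) = F x + d)
    (hT : Function.Semiconj ((↑) : ℝ → UnitAddCircle) F T) (hΛ : 0 < Λ)
    (hexp : ∀ x, Λ ≤ |deriv F x|) (hdist : ∀ x, |deriv (deriv F) x| ≤ C * |deriv F x|) :
    IsExpandingLift F T Λ C :=
  have hne (x : ℝ) : deriv F x ≠ 0 := abs_pos.1 (hΛ.trans_le (hexp x))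
  { differentiable := hF.differentiable two_ne_zero
    deriv_ne_zero := hne
    exists_degree := ⟨d, hdeg⟩
    semiconj := hT
    le_abs_deriv := hexp
    abs_deriv_le :=
      abs_deriv_le_exp_mul_of_abs_deriv_deriv_le hF.differentiable_deriv_two hne hdist }

protected lemma add_const (h : IsExpandingLift F T Λ C) (e : ℝ) :
    IsExpandingLift (fun x => F x + e) (fun y => T y + (e : UnitAddCircle)) Λ C where
  toIsCircleLift := h.toIsCircleLift.add_const e
  le_abs_deriv := by simpa only [deriv_add_const] using h.le_abs_deriv
  abs_deriv_le := by simpa only [deriv_add_const] using h.abs_deriv_le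

lemma nonneg (h : IsExpandingLift F T Λ C) : 0 ≤ C :=
  nonneg_of_le_exp_mul (abs_pos.2 (h.deriv_ne_zero 0)) (by simpa using h.abs_deriv_le 0 1)
    (by simpa using h.abs_deriv_le 1 0)

lemma imageDistortionLE_opComp {F : ℕ → ℝ → ℝ} {T : ℕ → UnitAddCircle → UnitAddCircle}
    (h : ∀ k, IsExpandingLift (F k) (T k) Λ C) (hΛ : 1 < Λ) (n : ℕ) :
    ImageDistortionLE (opComp F n) (C / (Λ - 1)) := by
  have hC : 0 ≤ C := (h 0).nonneg
  have hΛ_sub : 0 < Λ - 1 := sub_pos.2 hΛ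
  induction n with
  | zero => exact .id_of_nonneg (by positivity)
  | succ n ih =>
    have fixed_point : (C + C / (Λ - 1)) / Λ = C / (Λ - 1) := by
      field_simp
      ring
    have opComp_lift : IsCircleLift (opComp F n) (opComp T n) :=
      .opComp (fun k => (h k).toIsCircleLift) n
    rw [← fixed_point]
    exact .comp_of_expanding (h _).differentiable opComp_lift.differentiable (by linarith)
      (h _).le_abs_deriv (h _).abs_deriv_le (by positivity) ih

end IsExpandingLift

namespace IsCircleLift

variable {F : ℝ → ℝ} {T : UnitAddCircle → UnitAddCircle} {K : ℝ}

lemma exp_neg_le_transferOperator_one_of_strictMono (hF : IsCircleLift F T) (hmono : StrictMono F)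
    (hK : ImageDistortionLE F K) (x : UnitAddCircle) :
    Real.exp (-K) ≤ transferOperator F T (fun _ => 1) x := by
  obtain ⟨e, N, rfl, he⟩ := hF.exists_orderIso hmono
  obtain ⟨s, rfl⟩ := QuotientAddGroup.mk_surjective x
  let t : ℕ → ℝ := fun k => e.symm (s + k)
  have apply_t_succ (k : ℕ) : e (t (k + 1)) = e (t k) + 1 := by
    simp only [t, e.apply_symm_apply, Nat.cast_succ, add_assoc]
  have t_lt_succ (k : ℕ) : t k < t (k + 1) := by
    rw [← e.lt_iff_lt, apply_t_succ]
    exact lt_add_one _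
  have branch_bound (k : ℕ) : Real.exp (-K) * (t (k + 1) - t k) ≤ 1 / |deriv e (t k)| := by
    simpa only [apply_t_succ, add_sub_cancel_left, mul_one] using
      hK.exp_neg_mul_sub_le_div_abs_deriv hF.differentiable hmono (hF.deriv_ne_zero (t k))
        (t_lt_succ k)
  have t_N_sub : t N - t 0 = 1 := by
    simp only [t, symm_apply_add_natCast he, Nat.cast_zero, add_zero, add_sub_cancel_left]
  calc
    Real.exp (-K) = ∑ k ∈ Finset.range N, Real.exp (-K) * (t (k + 1) - t k) := by
      rw [← Finset.mul_sum, Finset.sum_range_sub, t_N_sub, mul_one]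
    _ ≤ ∑ k ∈ Finset.range N, 1 / |deriv e (t k)| := Finset.sum_le_sum fun k _ => branch_bound k
    _ = transferOperator e T (fun _ => 1) s := by
      rw [← finsum_mem_coe_finset]
      exact finsum_mem_eq_of_bijOn _ (bijOn_fibre he hF.semiconj s) fun k _ => by
        rw [hF.circleDeriv_coe]

lemma exp_neg_le_transferOperator_one (hF : IsCircleLift F T) (hK : ImageDistortionLE F K)
    (x : UnitAddCircle) : Real.exp (-K) ≤ transferOperator F T (fun _ => 1) x := by
  rcases hF.strictMono_or_strictMono_neg with hmono | hmono
  · exact hF.exp_neg_le_transferOperator_one_of_strictMono hmono hK x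
  · rw [← transferOperator_neg]
    exact hF.neg.exp_neg_le_transferOperator_one_of_strictMono hmono hK.neg (-x)

end IsCircleLift

theorem perturbed_circle_LB_general {F : ℕ → ℝ → ℝ} {T : ℕ → UnitAddCircle → UnitAddCircle}
    {Λ C : ℝ} (h : ∀ k, IsExpandingLift (F k) (T k) Λ C) (hΛ : 1 < Λ) (n : ℕ) (x : UnitAddCircle) :
    Real.exp (-(C / (Λ - 1))) ≤
      opComp (fun k => transferOperator (F k) (T k)) n (fun _ => 1) x := by
  have hlift (k : ℕ) : IsCircleLift (F k) (T k) := (h k).toIsCircleLift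
  rw [← transferOperator_opComp hlift]
  exact (IsCircleLift.opComp hlift n).exp_neg_le_transferOperator_one
    (IsExpandingLift.imageDistortionLE_opComp h hΛ n) x

/-- Uniform lower bound (LB) for concatenations of transfer operators of
additively perturbed expanding circle maps: if `T` is a `C²` expanding circle map with lift
`F` (`|F'| ≥ Λ > 1`, `|F''/F'| ≤ C₁`, every branch of `T` mapping onto the whole circle),
`T_ε = T + ε`, and `P_ε` is the transfer operator with respect to Haar measure, given by
`(P_ε f)(x) = ∑_{y : T_ε y = x} f(y)/|DT_ε(y)|`, then for all `n`, all
`ε_1, …, ε_n ∈ (−1,1)` and all `x`: `(P_{ε_n}∘⋯∘P_{ε_1})1(x) ≥ exp(−C₁/(Λ−1))`. -/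
theorem perturbed_circle_LB
    (F : ℝ → ℝ) (hF : ContDiff ℝ 2 F)
    (d : ℤ) (hdeg : ∀ x : ℝ, F (x + 1) = F x + d)
    (Λ : ℝ) (hΛ : 1 < Λ) (hexp : ∀ x : ℝ, Λ ≤ |deriv F x|)
    (C₁ : ℝ) (hdist : ∀ x : ℝ, |deriv (deriv F) x| ≤ C₁ * |deriv F x|)
    (T : UnitAddCircle → UnitAddCircle) (hT : ∀ x : ℝ, T (x : UnitAddCircle) = ((F x : ℝ) : UnitAddCircle))
    (hfin : ∀ (e : ℝ) (x : UnitAddCircle), {y : UnitAddCircle | T y + (e : UnitAddCircle) = x}.Finite)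
    (Pop : ℝ → (UnitAddCircle → ℝ) → (UnitAddCircle → ℝ))
    (hP : ∀ (e : ℝ) (f : UnitAddCircle → ℝ) (x : UnitAddCircle),
      Pop e f x = ∑ᶠ y ∈ {y : UnitAddCircle | T y + (e : UnitAddCircle) = x},
        f y / |circleDeriv F y|) :
    ∀ (n : ℕ) (ε : ℕ → ℝ), (∀ k, ε k ∈ Set.Ioo (-1 : ℝ) 1) →
      ∀ x : UnitAddCircle,
        Real.exp (-(C₁ / (Λ - 1)))
          ≤ opComp (fun k => Pop (ε k)) n (fun _ => (1 : ℝ)) x := by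
  intro n ε _ x
  have hexpanding : IsExpandingLift F T Λ C₁ :=
    .of_contDiff hF hdeg (fun t => (hT t).symm) (one_pos.trans hΛ) hexp hdist
  obtain rfl : Pop = fun e => transferOperator (fun t => F t + e) (fun y => T y + e) := by
    ext e f y
    rw [hP, transferOperator_add_const]
  exact perturbed_circle_LB_general (fun k => hexpanding.add_const (ε k)) hΛ n x
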